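/- Let d, N ∈ ℕ, p ≥ 2 and c₀ > 0. There exists c > 0, depending only on d, N, p, c₀, with the following property. Let Q ⊂ ℝ^d be a cube with sidelength R, let θ : ℝ^d → ℝ be continuously differentiable with support contained in 2Q, 0 ≤ θ ≤ 1, θ ≡ 1 on Q and |∇θ| ≤ c₀/R everywhere, and let u be twice continuously differentiable on a neighborhood of the closure of 2Q with values in ℝ^N. Set B := sup_{x ∈ 2Q} |u(x) − ⟨u⟩_{2Q}|. Then ⨍_{2Q} θ^{p+2}|∇u|^{p+2} ≤ c[(B/R)^{p+2} + B² ⨍_{2Q} θ^{p+2}|∇u|^{p−2}|∇²u|²]. -/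

import Mathlib

open MeasureTheory Metric

noncomputable section

/-- The open axis-parallel cube with center `c` and sidelength `R`. -/
def cube {d : ℕ} (c : EuclideanSpace ℝ (Fin d)) (R : ℝ) : Set (EuclideanSpace ℝ (Fin d)) :=
  {x | ∀ i, |x i - c i| < R / 2}

/-- Frobenius norm of the first derivative array of `u` at `x`. -/
def gradFrob {d N : ℕ} (u : EuclideanSpace ℝ (Fin d) → EuclideanSpace ℝ (Fin N))
    (x : EuclideanSpace ℝ (Fin d)) : ℝ :=
  Real.sqrt (∑ α : Fin N, ∑ i : Fin d, (fderiv ℝ u x (EuclideanSpace.single i 1) α) ^ 2)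

/-- Frobenius norm of the second derivative array of `u` at `x`. -/
def hessFrob {d N : ℕ} (u : EuclideanSpace ℝ (Fin d) → EuclideanSpace ℝ (Fin N))
    (x : EuclideanSpace ℝ (Fin d)) : ℝ :=
  Real.sqrt (∑ α : Fin N, ∑ i : Fin d, ∑ j : Fin d,
    (iteratedFDeriv ℝ 2 u x
      ![EuclideanSpace.single i 1, EuclideanSpace.single j 1] α) ^ 2)

/-
Write `g = |∇u|`, `h = |∇²u|`, `v = u - m`. The compactly supported `C¹` field with components
`θ^(p+2) g^p ⟪v, ∂ᵢu⟫` has a divergence of integral zero, which expands to `θ^(p+2) g^(p+2)` plus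
terms containing `|v| ≤ B` that are at most a multiple of `B θ^(p+2) g^p h` or of
`B |∇θ| θ^(p+1) g^(p+1)`. Young's inequality absorbs half of `θ^(p+2) g^(p+2)` from these.
-/

open scoped InnerProductSpace

section RealInequalities

lemma mul_rpow_sub_one_le_rpow_add_rpow {a b q : ℝ} (ha : 0 ≤ a) (hb : 0 ≤ b) (hq : 1 ≤ q) :
    b * a ^ (q - 1) ≤ a ^ q + b ^ q := by
  have hmax : 0 ≤ max a b := le_max_of_le_left ha
  calc b * a ^ (q - 1) ≤ max a b * max a b ^ (q - 1) := by
        have : 0 ≤ q - 1 := by linarith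
        gcongr
        exacts [le_max_right a b, le_max_left a b]
    _ = max a b ^ q := by rw [← Real.rpow_one_add' hmax (by linarith), add_sub_cancel]
    _ ≤ a ^ q + b ^ q := by
        rcases max_choice a b with h | h <;> rw [h] <;> linarith [Real.rpow_nonneg ha q,
          Real.rpow_nonneg hb q]

lemma rpow_mul_rpow_add_one_le {p t g b : ℝ} (hp : 0 ≤ p) (ht : 0 ≤ t) (hg : 0 ≤ g)
    (hb : 0 ≤ b) :
    b * (t ^ (p + 1) * g ^ (p + 1)) ≤
      1 / 4 * (t ^ (p + 2) * g ^ (p + 2)) + 1 / 4 * (4 * b) ^ (p + 2) := by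
  have young := mul_rpow_sub_one_le_rpow_add_rpow (mul_nonneg ht hg)
    (mul_nonneg zero_le_four hb) (by linarith : 1 ≤ p + 2)
  rw [show p + 2 - 1 = p + 1 by ring, Real.mul_rpow ht hg, Real.mul_rpow ht hg] at young
  linarith

lemma rpow_add_two {g p : ℝ} (hg : 0 ≤ g) (hp : p + 2 ≠ 0) : g ^ (p + 2) = g ^ p * g ^ 2 := by
  rw [Real.rpow_add' hg hp, Real.rpow_two]

lemma rpow_eq_rpow_sub_two_mul_sq {g p : ℝ} (hg : 0 ≤ g) (hp : p ≠ 0) :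
    g ^ p = g ^ (p - 2) * g ^ 2 := by
  rw [← rpow_add_two hg (by simpa using hp), sub_add_cancel]

lemma rpow_mul_le_rpow_add_two {p g k : ℝ} (hp : 2 ≤ p) (hg : 0 ≤ g) :
    k * g ^ p ≤ 1 / 4 * g ^ (p + 2) + k ^ 2 * g ^ (p - 2) := by
  rw [rpow_add_two hg (by linarith), rpow_eq_rpow_sub_two_mul_sq hg (by linarith : p ≠ 0)]
  have : 0 ≤ g ^ (p - 2) * (g ^ 2 / 2 - k) ^ 2 := by positivity
  linarith

lemma rpow_mul_rpow_le_of_le_add {p t g h D C A : ℝ} (hp : 2 ≤ p) (ht : 0 ≤ t) (hg : 0 ≤ g)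
    (hA : 0 ≤ A)
    (hle : t ^ (p + 2) * g ^ (p + 2) ≤
      D + C * (t ^ (p + 2) * g ^ p * h) + A * (t ^ (p + 1) * g ^ (p + 1))) :
    t ^ (p + 2) * g ^ (p + 2) ≤
      2 * D + (4 * A) ^ (p + 2) + 2 * C ^ 2 * (t ^ (p + 2) * g ^ (p - 2) * h ^ 2) := by
  have first_order := rpow_mul_rpow_add_one_le (by linarith : 0 ≤ p) ht hg hA
  have second_order := mul_le_mul_of_nonneg_left
    (rpow_mul_le_rpow_add_two (k := C * h) hp hg) (Real.rpow_nonneg ht (p + 2))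
  have : 0 ≤ (4 * A) ^ (p + 2) := by positivity
  linarith

end RealInequalities

section FiniteFamilies

variable {ι E F : Type*} [Fintype ι] [NormedAddCommGroup F]

lemma norm_sum_diag_le (H : ι → ι → F) :
    ‖∑ i, H i i‖ ≤ √(Fintype.card ι) * √(∑ i, ∑ j, ‖H i j‖ ^ 2) := by
  rw [← Real.sqrt_mul (Nat.cast_nonneg _)]
  refine Real.le_sqrt_of_sq_le ?_
  calc ‖∑ i, H i i‖ ^ 2 ≤ (∑ i, ‖H i i‖) ^ 2 := by gcongr; exact norm_sum_le _ _
    _ ≤ Fintype.card ι * ∑ i, ‖H i i‖ ^ 2 := sq_sum_le_card_mul_sum_sq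
    _ ≤ Fintype.card ι * ∑ i, ∑ j, ‖H i j‖ ^ 2 := by
        gcongr with i
        exact Finset.single_le_sum (f := fun j ↦ ‖H i j‖ ^ 2) (fun j _ ↦ sq_nonneg _)
          (Finset.mem_univ i)

variable [InnerProductSpace ℝ F]

lemma abs_sum_inner_le_sqrt_mul_sqrt (a b : ι → F) :
    |∑ i, ⟪a i, b i⟫_ℝ| ≤ √(∑ i, ‖a i‖ ^ 2) * √(∑ i, ‖b i‖ ^ 2) := by
  simpa [PiLp.inner_apply, PiLp.norm_eq_of_L2] using
    abs_real_inner_le_norm (WithLp.toLp 2 a) (WithLp.toLp 2 b)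

lemma abs_sum_mul_inner_le (T : ι → ℝ) (v : F) (a : ι → F) :
    |∑ i, T i * ⟪v, a i⟫_ℝ| ≤ √(∑ i, T i ^ 2) * ‖v‖ * √(∑ i, ‖a i‖ ^ 2) := by
  have cauchy_schwarz := abs_sum_inner_le_sqrt_mul_sqrt (fun i ↦ T i • v) a
  simpa only [real_inner_smul_left, norm_smul, mul_pow, Real.norm_eq_abs, sq_abs,
    ← Finset.sum_mul, Real.sqrt_mul' _ (sq_nonneg ‖v‖), Real.sqrt_sq (norm_nonneg v)]
    using cauchy_schwarz

lemma sqrt_sum_sq_sum_inner_le (a : ι → F) (H : ι → ι → F) :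
    √(∑ i, (∑ j, ⟪a j, H i j⟫_ℝ) ^ 2) ≤
      √(∑ j, ‖a j‖ ^ 2) * √(∑ i, ∑ j, ‖H i j‖ ^ 2) := by
  rw [← Real.sqrt_mul (by positivity), Finset.mul_sum]
  gcongr with i
  rw [← Real.sqrt_le_sqrt_iff (by positivity), Real.sqrt_sq_eq_abs, Real.sqrt_mul (by positivity)]
  exact abs_sum_inner_le_sqrt_mul_sqrt a (H i)

lemma sqrt_sum_sq_apply_le_opNorm [NormedAddCommGroup E] [InnerProductSpace ℝ E] {e : ι → E}
    (he : Orthonormal ℝ e) (L : E →L[ℝ] ℝ) : √(∑ i, L (e i) ^ 2) ≤ ‖L‖ := by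
  set w := ∑ i, L (e i) • e i with hw
  have norm_w : ‖w‖ = √(∑ i, L (e i) ^ 2) := by
    rw [norm_eq_sqrt_real_inner, hw, he.inner_sum]
    simp [sq]
  have L_w : L w = ‖w‖ * ‖w‖ := by
    rw [norm_w, Real.mul_self_sqrt (by positivity), hw]
    simp [sq]
  rw [← norm_w]
  rcases (norm_nonneg w).eq_or_lt with h | h
  · exact h ▸ norm_nonneg L
  · exact le_of_mul_le_mul_right (L_w ▸ (le_abs_self _).trans (L.le_opNorm w)) h

end FiniteFamilies

section Derivatives

variable {ι E F : Type*} [Fintype ι] [NormedAddCommGroup E] [NormedSpace ℝ E]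
  [NormedAddCommGroup F] [InnerProductSpace ℝ F]

/-- The Hilbert–Schmidt norm of the array of first derivatives of `u` in the directions `e i`;
this is the Frobenius norm of `∇u` when `e` is an orthonormal basis. -/
def gradNorm (e : ι → E) (u : E → F) (x : E) : ℝ :=
  √(∑ i, ‖fderiv ℝ u x (e i)‖ ^ 2)

/-- The Hilbert–Schmidt norm of the array of second derivatives of `u` in the directions
`e i`, `e j`; this is the Frobenius norm of `∇²u` when `e` is an orthonormal basis. -/
def hessNorm (e : ι → E) (u : E → F) (x : E) : ℝ :=
  √(∑ i, ∑ j, ‖fderiv ℝ (fderiv ℝ u) x (e i) (e j)‖ ^ 2)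

/-- The `i`-th component of the vector field `θ^(p+2) |∇u|^p (∇u)ᵀ(u - m)`, whose divergence
has `θ^(p+2) |∇u|^(p+2)` as its leading term. -/
def cutoffFlux (p : ℝ) (θ : E → ℝ) (e : ι → E) (u : E → F) (m : F) (i : ι) (x : E) : ℝ :=
  θ x ^ (p + 2) * (gradNorm e u x ^ p * ⟪u x - m, fderiv ℝ u x (e i)⟫_ℝ)

variable {e : ι → E} {u : E → F} {x : E}

lemma gradNorm_nonneg : 0 ≤ gradNorm e u x := Real.sqrt_nonneg _

lemma hessNorm_nonneg : 0 ≤ hessNorm e u x := Real.sqrt_nonneg _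

lemma gradNorm_sq : gradNorm e u x ^ 2 = ∑ i, ‖fderiv ℝ u x (e i)‖ ^ 2 :=
  Real.sq_sqrt (by positivity)

lemma gradNorm_rpow (q : ℝ) :
    gradNorm e u x ^ q = (∑ i, ‖fderiv ℝ u x (e i)‖ ^ 2) ^ (q / 2) := by
  rw [gradNorm, Real.sqrt_eq_rpow, ← Real.rpow_mul (by positivity)]
  congr 1
  ring

lemma continuousAt_gradNorm (hu : ContDiffAt ℝ 1 u x) : ContinuousAt (gradNorm e u) x := by
  have : ContinuousAt (fderiv ℝ u) x := (hu.fderiv_right (m := 0) (by norm_num)).continuousAt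
  unfold gradNorm
  fun_prop

lemma continuousAt_hessNorm (hu : ContDiffAt ℝ 2 u x) : ContinuousAt (hessNorm e u) x := by
  have hDu : ContDiffAt ℝ 1 (fderiv ℝ u) x := hu.fderiv_right (by norm_num)
  have : ContinuousAt (fderiv ℝ (fderiv ℝ u)) x :=
    (hDu.fderiv_right (m := 0) (by norm_num)).continuousAt
  unfold hessNorm
  fun_prop

lemma hasFDerivAt_fderiv_apply (hu : ContDiffAt ℝ 2 u x) (w : E) :
    HasFDerivAt (fun y ↦ fderiv ℝ u y w) ((fderiv ℝ (fderiv ℝ u) x).flip w) x := by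
  have hDu : DifferentiableAt ℝ (fderiv ℝ u) x :=
    (hu.fderiv_right (m := 1) (by norm_num)).differentiableAt one_ne_zero
  simpa using hDu.hasFDerivAt.clm_apply (hasFDerivAt_const w x)

lemma contDiffAt_gradNorm_rpow {p : ℝ} (hp : 2 ≤ p) (hu : ContDiffAt ℝ 2 u x) :
    ContDiffAt ℝ 1 (fun y ↦ gradNorm e u y ^ p) x := by
  have hDu : ContDiffAt ℝ 1 (fderiv ℝ u) x := hu.fderiv_right (by norm_num)
  simp only [gradNorm_rpow]
  refine ContDiffAt.rpow_const_of_le (m := 1) ?_ (by push_cast; linarith)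
  exact ContDiffAt.sum fun i _ ↦ (hDu.clm_apply contDiffAt_const).norm_sq ℝ

lemma fderiv_gradNorm_rpow_apply {p : ℝ} (hp : 2 ≤ p) (hu : ContDiffAt ℝ 2 u x) (w : E) :
    fderiv ℝ (fun y ↦ gradNorm e u y ^ p) x w =
      p * gradNorm e u x ^ (p - 2) *
        ∑ j, ⟪fderiv ℝ u x (e j), fderiv ℝ (fderiv ℝ u) x w (e j)⟫_ℝ := by
  have hsum := HasFDerivAt.fun_sum (u := Finset.univ)
    fun j _ ↦ (hasFDerivAt_fderiv_apply hu (e j)).norm_sq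
  simp only [gradNorm_rpow]
  rw [(hsum.rpow_const (p := p / 2) (Or.inr (by linarith))).fderiv,
    show p / 2 - 1 = (p - 2) / 2 by ring]
  simp only [smul_apply, sum_apply, ContinuousLinearMap.comp_apply,
    ContinuousLinearMap.flip_apply, coe_innerSL_apply, nsmul_eq_mul, Nat.cast_ofNat,
    ← Finset.mul_sum, smul_eq_mul]
  ring

lemma contDiffAt_cutoffFlux {p : ℝ} (hp : 2 ≤ p) {θ : E → ℝ} (hθ : ContDiffAt ℝ 1 θ x)
    (hu : ContDiffAt ℝ 2 u x) (m : F) (i : ι) : ContDiffAt ℝ 1 (cutoffFlux p θ e u m i) x := by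
  have hDu : ContDiffAt ℝ 1 (fderiv ℝ u) x := hu.fderiv_right (by norm_num)
  have hu₁ : ContDiffAt ℝ 1 u x := hu.of_le (by norm_num)
  exact (hθ.rpow_const_of_le (m := 1) (by push_cast; linarith)).mul
    ((contDiffAt_gradNorm_rpow hp hu).mul
      ((hu₁.sub contDiffAt_const).inner ℝ (hDu.clm_apply contDiffAt_const)))

lemma fderiv_cutoffFlux_apply {p : ℝ} (hp : 2 ≤ p) {θ : E → ℝ} (hθ : DifferentiableAt ℝ θ x)
    (hu : ContDiffAt ℝ 2 u x) (m : F) (i : ι) (w : E) :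
    fderiv ℝ (cutoffFlux p θ e u m i) x w =
      θ x ^ (p + 2) * (gradNorm e u x ^ p *
          (⟪u x - m, fderiv ℝ (fderiv ℝ u) x w (e i)⟫_ℝ
            + ⟪fderiv ℝ u x w, fderiv ℝ u x (e i)⟫_ℝ)
        + p * gradNorm e u x ^ (p - 2) *
            (∑ j, ⟪fderiv ℝ u x (e j), fderiv ℝ (fderiv ℝ u) x w (e j)⟫_ℝ) *
            ⟪u x - m, fderiv ℝ u x (e i)⟫_ℝ)
        + (p + 2) * θ x ^ (p + 1) * fderiv ℝ θ x w *
            (gradNorm e u x ^ p * ⟪u x - m, fderiv ℝ u x (e i)⟫_ℝ) := by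
  have hθ' := hθ.hasFDerivAt.rpow_const (p := p + 2) (Or.inr (by linarith))
  have hg' := ((contDiffAt_gradNorm_rpow (e := e) hp hu).differentiableAt one_ne_zero).hasFDerivAt
  have hv' := ((hu.differentiableAt two_ne_zero).hasFDerivAt.sub_const m).inner ℝ
    (hasFDerivAt_fderiv_apply hu (e i))
  have hflux : HasFDerivAt (cutoffFlux p θ e u m i) _ x := hθ'.fun_mul (hg'.fun_mul hv')
  rw [hflux.fderiv, show p + 2 - 1 = p + 1 by ring]
  simp only [smul_add, add_apply, smul_apply, ContinuousLinearMap.comp_apply,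
    ContinuousLinearMap.prod_apply, ContinuousLinearMap.flip_apply, fderivInnerCLM_apply,
    smul_eq_mul, fderiv_gradNorm_rpow_apply hp hu]
  ring

lemma sum_fderiv_cutoffFlux_apply {p : ℝ} (hp : 2 ≤ p) {θ : E → ℝ}
    (hθ : DifferentiableAt ℝ θ x) (hu : ContDiffAt ℝ 2 u x) (m : F) :
    ∑ i, fderiv ℝ (cutoffFlux p θ e u m i) x (e i) =
      θ x ^ (p + 2) * gradNorm e u x ^ (p + 2)
        + θ x ^ (p + 2) * gradNorm e u x ^ p *
            ⟪u x - m, ∑ i, fderiv ℝ (fderiv ℝ u) x (e i) (e i)⟫_ℝ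
        + p * θ x ^ (p + 2) * gradNorm e u x ^ (p - 2) *
            ∑ i, (∑ j, ⟪fderiv ℝ u x (e j), fderiv ℝ (fderiv ℝ u) x (e i) (e j)⟫_ℝ) *
              ⟪u x - m, fderiv ℝ u x (e i)⟫_ℝ
        + (p + 2) * θ x ^ (p + 1) * gradNorm e u x ^ p *
            ∑ i, fderiv ℝ θ x (e i) * ⟪u x - m, fderiv ℝ u x (e i)⟫_ℝ := by
  rw [rpow_add_two gradNorm_nonneg (by linarith), gradNorm_sq, inner_sum, ← mul_assoc]
  iterate 4 rw [Finset.mul_sum]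
  simp only [← Finset.sum_add_distrib]
  refine Finset.sum_congr rfl fun i _ ↦ ?_
  rw [fderiv_cutoffFlux_apply hp hθ hu, real_inner_self_eq_norm_sq]
  ring

end Derivatives

section Pointwise

variable {ι E F : Type*} [Fintype ι] [NormedAddCommGroup E] [InnerProductSpace ℝ E]
  [NormedAddCommGroup F] [InnerProductSpace ℝ F]
  {p B L : ℝ} {θ : E → ℝ} {e : ι → E} {u : E → F} {m : F} {x : E}

lemma rpow_mul_gradNorm_rpow_le_divergence_add (he : Orthonormal ℝ e) (hp : 2 ≤ p)
    (hθ₀ : 0 ≤ θ x) (hθ : DifferentiableAt ℝ θ x) (hL : ‖fderiv ℝ θ x‖ ≤ L)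
    (hu : ContDiffAt ℝ 2 u x) (hB : ‖u x - m‖ ≤ B) :
    θ x ^ (p + 2) * gradNorm e u x ^ (p + 2) ≤
      ∑ i, fderiv ℝ (cutoffFlux p θ e u m i) x (e i)
        + (√(Fintype.card ι) + p) * B * (θ x ^ (p + 2) * gradNorm e u x ^ p * hessNorm e u x)
        + (p + 2) * (B * L) * (θ x ^ (p + 1) * gradNorm e u x ^ (p + 1)) := by
  have hB₀ : 0 ≤ B := (norm_nonneg _).trans hB
  have hL₀ : 0 ≤ L := (norm_nonneg _).trans hL
  have hg₀ : 0 ≤ gradNorm e u x := gradNorm_nonneg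
  have hh₀ : 0 ≤ hessNorm e u x := hessNorm_nonneg
  set a : ι → F := fun i ↦ fderiv ℝ u x (e i)
  set H : ι → ι → F := fun i j ↦ fderiv ℝ (fderiv ℝ u) x (e i) (e j)
  have laplacian_bound : |⟪u x - m, ∑ i, H i i⟫_ℝ| ≤ B * (√(Fintype.card ι) * hessNorm e u x) :=
    (abs_real_inner_le_norm _ _).trans (by gcongr; exact norm_sum_diag_le H)
  have gradient_bound : |∑ i, (∑ j, ⟪a j, H i j⟫_ℝ) * ⟪u x - m, a i⟫_ℝ| ≤
      gradNorm e u x * hessNorm e u x * B * gradNorm e u x :=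
    (abs_sum_mul_inner_le _ _ _).trans
      (by gcongr; exacts [sqrt_sum_sq_sum_inner_le a H, le_rfl])
  have cutoff_bound : |∑ i, fderiv ℝ θ x (e i) * ⟪u x - m, a i⟫_ℝ| ≤ L * B * gradNorm e u x :=
    (abs_sum_mul_inner_le _ _ _).trans
      (by gcongr; exacts [(sqrt_sum_sq_apply_le_opNorm he _).trans hL, le_rfl])
  have hgp₁ : gradNorm e u x ^ (p + 1) = gradNorm e u x ^ p * gradNorm e u x :=
    Real.rpow_add_one' hg₀ (by linarith)
  have weighted {w s b : ℝ} (hw : 0 ≤ w) (hs : |s| ≤ b) : -(w * b) ≤ w * s := by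
    nlinarith [neg_le_of_abs_le hs]
  have laplacian_term := weighted
    (by positivity : 0 ≤ θ x ^ (p + 2) * gradNorm e u x ^ p) laplacian_bound
  have gradient_term := weighted
    (by positivity : 0 ≤ p * θ x ^ (p + 2) * gradNorm e u x ^ (p - 2)) gradient_bound
  have cutoff_term := weighted
    (by positivity : 0 ≤ (p + 2) * θ x ^ (p + 1) * gradNorm e u x ^ p) cutoff_bound
  rw [sum_fderiv_cutoffFlux_apply hp hθ hu, hgp₁]
  rw [rpow_eq_rpow_sub_two_mul_sq hg₀ (by linarith : p ≠ 0)] at laplacian_term cutoff_term ⊢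
  linarith

lemma rpow_mul_gradNorm_rpow_le (he : Orthonormal ℝ e) (hp : 2 ≤ p)
    (hθ₀ : 0 ≤ θ x) (hθ : DifferentiableAt ℝ θ x) (hL : ‖fderiv ℝ θ x‖ ≤ L)
    (hu : ContDiffAt ℝ 2 u x) (hB : ‖u x - m‖ ≤ B) :
    θ x ^ (p + 2) * gradNorm e u x ^ (p + 2) ≤
      2 * ∑ i, fderiv ℝ (cutoffFlux p θ e u m i) x (e i) + (4 * ((p + 2) * (B * L))) ^ (p + 2)
        + 2 * ((√(Fintype.card ι) + p) * B) ^ 2 *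
            (θ x ^ (p + 2) * gradNorm e u x ^ (p - 2) * hessNorm e u x ^ 2) := by
  have hB₀ : 0 ≤ B := (norm_nonneg _).trans hB
  have hL₀ : 0 ≤ L := (norm_nonneg _).trans hL
  exact rpow_mul_rpow_le_of_le_add hp hθ₀ gradNorm_nonneg (by positivity)
    (rpow_mul_gradNorm_rpow_le_divergence_add he hp hθ₀ hθ hL hu hB)

end Pointwise

section CompactlySupportedDerivatives

variable {E F : Type*} [NormedAddCommGroup E] [NormedSpace ℝ E] [MeasurableSpace E] [BorelSpace E]
  [NormedAddCommGroup F] [NormedSpace ℝ F] (μ : Measure E)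

lemma integrable_fderiv_apply [IsFiniteMeasureOnCompacts μ] {f : E → F}
    (hf : ContDiff ℝ 1 f) (hc : HasCompactSupport f) (w : E) :
    Integrable (fun x ↦ fderiv ℝ f x w) μ :=
  ((hf.continuous_fderiv one_ne_zero).clm_apply continuous_const).integrable_of_hasCompactSupport
    (hc.fderiv_apply (𝕜 := ℝ) w)

lemma integral_fderiv_apply_eq_zero [FiniteDimensional ℝ E] [μ.IsAddHaarMeasure] {f : E → ℝ}
    (hf : ContDiff ℝ 1 f) (hc : HasCompactSupport f) (w : E) :
    ∫ x, fderiv ℝ f x w ∂μ = 0 := by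
  have by_parts := integral_mul_fderiv_eq_neg_fderiv_mul_of_integrable (𝕜 := ℝ) (μ := μ)
    (f := fun _ ↦ 1) (g := f) (v := w) (by simp)
    (by simpa using integrable_fderiv_apply μ hf hc w)
    (by simpa using hf.continuous.integrable_of_hasCompactSupport hc)
    (fun x _ ↦ differentiableAt_const 1) (fun x _ ↦ hf.differentiable one_ne_zero x)
  simpa using by_parts

end CompactlySupportedDerivatives

section Integration

lemma setIntegral_rpow_mul_eq_of_tsupport_subset {E : Type*} [TopologicalSpace E]
    [MeasurableSpace E] (μ : Measure E) {q : ℝ} (hq : q ≠ 0) {θ : E → ℝ} {Ω : Set E}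
    (hΩ : tsupport θ ⊆ Ω) (f : E → ℝ) :
    ∫ x in Ω, θ x ^ q * f x ∂μ = ∫ x in tsupport θ, θ x ^ q * f x ∂μ := by
  have vanish (x : E) (hx : x ∉ tsupport θ) : θ x ^ q * f x = 0 := by
    rw [image_eq_zero_of_notMem_tsupport hx, Real.zero_rpow hq, zero_mul]
  rw [setIntegral_eq_integral_of_forall_compl_eq_zero vanish,
    setIntegral_eq_integral_of_forall_compl_eq_zero fun x hx ↦ vanish x fun h ↦ hx (hΩ h)]

section NormedDomain

variable {ι E F : Type*} [Fintype ι] [NormedAddCommGroup E] [NormedSpace ℝ E]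
  [NormedAddCommGroup F] [InnerProductSpace ℝ F]

lemma tsupport_cutoffFlux_subset {p : ℝ} (hp : p + 2 ≠ 0) (θ : E → ℝ)
    (e : ι → E) (u : E → F) (m : F) (i : ι) : tsupport (cutoffFlux p θ e u m i) ⊆ tsupport θ :=
  closure_mono fun x hx hθx ↦ hx (by
    rw [cutoffFlux, show θ x = 0 from hθx, Real.zero_rpow hp, zero_mul])

lemma hasCompactSupport_cutoffFlux {p : ℝ} (hp : p + 2 ≠ 0) {θ : E → ℝ}
    (hc : HasCompactSupport θ) (e : ι → E) (u : E → F) (m : F) (i : ι) :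
    HasCompactSupport (cutoffFlux p θ e u m i) :=
  hc.of_isClosed_subset (isClosed_tsupport _) (tsupport_cutoffFlux_subset hp θ e u m i)

lemma contDiff_cutoffFlux {p : ℝ} (hp : 2 ≤ p) {θ : E → ℝ}
    (hθ : ContDiff ℝ 1 θ) {u : E → F} (hu : ∀ x ∈ tsupport θ, ContDiffAt ℝ 2 u x)
    (e : ι → E) (m : F) (i : ι) : ContDiff ℝ 1 (cutoffFlux p θ e u m i) := by
  have hsupp := tsupport_cutoffFlux_subset (by linarith) θ e u m i
  exact contMDiff_iff_contDiff.1 <| contMDiff_of_tsupport fun x hx ↦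
    (contDiffAt_cutoffFlux hp hθ.contDiffAt (hu x (hsupp hx)) m i).contMDiffAt

variable [MeasurableSpace E] [BorelSpace E] (μ : Measure E)

lemma integrableOn_tsupport_mul_gradNorm_rpow [IsFiniteMeasureOnCompacts μ]
    {p : ℝ} (hp : 0 ≤ p + 2) {θ : E → ℝ} (hθ : Continuous θ) (hc : HasCompactSupport θ)
    {u : E → F} (hu : ∀ x ∈ tsupport θ, ContDiffAt ℝ 1 u x) (e : ι → E) :
    IntegrableOn (fun x ↦ θ x ^ (p + 2) * gradNorm e u x ^ (p + 2)) (tsupport θ) μ := by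
  refine ContinuousOn.integrableOn_compact hc fun x hx ↦ ContinuousAt.continuousWithinAt ?_
  exact (hθ.continuousAt.rpow_const (Or.inr hp)).mul
    ((continuousAt_gradNorm (hu x hx)).rpow_const (Or.inr hp))

lemma integrableOn_tsupport_mul_hessNorm_sq [IsFiniteMeasureOnCompacts μ]
    {p : ℝ} (hp : 2 ≤ p) {θ : E → ℝ} (hθ : Continuous θ) (hc : HasCompactSupport θ)
    {u : E → F} (hu : ∀ x ∈ tsupport θ, ContDiffAt ℝ 2 u x) (e : ι → E) :
    IntegrableOn (fun x ↦ θ x ^ (p + 2) * gradNorm e u x ^ (p - 2) * hessNorm e u x ^ 2)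
      (tsupport θ) μ := by
  refine ContinuousOn.integrableOn_compact hc fun x hx ↦ ContinuousAt.continuousWithinAt ?_
  exact ((hθ.continuousAt.rpow_const (Or.inr (by linarith))).mul
    ((continuousAt_gradNorm ((hu x hx).of_le (by norm_num))).rpow_const
      (Or.inr (by linarith)))).mul ((continuousAt_hessNorm (hu x hx)).pow 2)

lemma integrable_fderiv_cutoffFlux_apply [IsFiniteMeasureOnCompacts μ]
    {p : ℝ} (hp : 2 ≤ p) {θ : E → ℝ} (hθ : ContDiff ℝ 1 θ) (hc : HasCompactSupport θ)
    {u : E → F} (hu : ∀ x ∈ tsupport θ, ContDiffAt ℝ 2 u x) (e : ι → E) (m : F) (i : ι) (w : E) :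
    Integrable (fun x ↦ fderiv ℝ (cutoffFlux p θ e u m i) x w) μ :=
  integrable_fderiv_apply μ (contDiff_cutoffFlux hp hθ hu e m i)
    (hasCompactSupport_cutoffFlux (by linarith) hc e u m i) w

lemma setIntegral_tsupport_sum_fderiv_cutoffFlux [FiniteDimensional ℝ E]
    [μ.IsAddHaarMeasure] {p : ℝ} (hp : 2 ≤ p) {θ : E → ℝ}
    (hθ : ContDiff ℝ 1 θ) (hc : HasCompactSupport θ) {u : E → F}
    (hu : ∀ x ∈ tsupport θ, ContDiffAt ℝ 2 u x) (e : ι → E) (m : F) :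
    ∫ x in tsupport θ, ∑ i, fderiv ℝ (cutoffFlux p θ e u m i) x (e i) ∂μ = 0 := by
  have hsupp (i : ι) := tsupport_cutoffFlux_subset (by linarith) θ e u m i
  rw [setIntegral_eq_integral_of_forall_compl_eq_zero fun x hx ↦ Finset.sum_eq_zero fun i _ ↦ by
      rw [fderiv_of_notMem_tsupport ℝ fun h ↦ hx (hsupp i h), zero_apply],
    integral_finsetSum _ fun i _ ↦ integrable_fderiv_cutoffFlux_apply μ hp hθ hc hu e m i (e i)]
  exact Finset.sum_eq_zero fun i _ ↦ integral_fderiv_apply_eq_zero μ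
    (contDiff_cutoffFlux hp hθ hu e m i)
    (hasCompactSupport_cutoffFlux (by linarith) hc e u m i) (e i)

end NormedDomain

variable {ι E F : Type*} [Fintype ι] [NormedAddCommGroup E] [InnerProductSpace ℝ E]
  [FiniteDimensional ℝ E] [MeasurableSpace E] [BorelSpace E] [NormedAddCommGroup F]
  [InnerProductSpace ℝ F] (μ : Measure E) [μ.IsAddHaarMeasure]
  {p B L : ℝ} {θ : E → ℝ} {e : ι → E} {u : E → F} {m : F} {Ω : Set E}

lemma setIntegral_tsupport_rpow_mul_gradNorm_rpow_le (he : Orthonormal ℝ e) (hp : 2 ≤ p)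
    (hθ : ContDiff ℝ 1 θ) (hc : HasCompactSupport θ) (hθ₀ : ∀ x, 0 ≤ θ x)
    (hL : ∀ x, ‖fderiv ℝ θ x‖ ≤ L) (hu : ∀ x ∈ tsupport θ, ContDiffAt ℝ 2 u x)
    (hB : ∀ x ∈ tsupport θ, ‖u x - m‖ ≤ B) :
    ∫ x in tsupport θ, θ x ^ (p + 2) * gradNorm e u x ^ (p + 2) ∂μ ≤
      (4 * ((p + 2) * (B * L))) ^ (p + 2) * μ.real (tsupport θ)
        + 2 * ((√(Fintype.card ι) + p) * B) ^ 2 *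
            ∫ x in tsupport θ,
              θ x ^ (p + 2) * gradNorm e u x ^ (p - 2) * hessNorm e u x ^ 2 ∂μ := by
  have hdiv : IntegrableOn (fun x ↦ 2 * ∑ i, fderiv ℝ (cutoffFlux p θ e u m i) x (e i))
      (tsupport θ) μ :=
    ((integrable_finsetSum _ fun i _ ↦
      integrable_fderiv_cutoffFlux_apply μ hp hθ hc hu e m i (e i)).const_mul 2).integrableOn
  have hconst : IntegrableOn (fun _ ↦ (4 * ((p + 2) * (B * L))) ^ (p + 2)) (tsupport θ) μ :=
    integrableOn_const hc.measure_ne_top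
  have hhess := (integrableOn_tsupport_mul_hessNorm_sq μ hp hθ.continuous hc hu e).const_mul
    (2 * ((√(Fintype.card ι) + p) * B) ^ 2)
  refine (setIntegral_mono_on
    (integrableOn_tsupport_mul_gradNorm_rpow μ (by linarith) hθ.continuous hc
      (fun x hx ↦ (hu x hx).of_le (by norm_num)) e)
    ((hdiv.add hconst).add hhess) (isClosed_tsupport θ).measurableSet fun x hx ↦
      rpow_mul_gradNorm_rpow_le he hp (hθ₀ x) (hθ.differentiable one_ne_zero x) (hL x) (hu x hx)
        (hB x hx)).trans_eq ?_
  rw [integral_add' (hdiv.add hconst) hhess, integral_add' hdiv hconst, integral_const_mul,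
    setIntegral_tsupport_sum_fderiv_cutoffFlux μ hp hθ hc hu, integral_const_mul,
    setIntegral_const, smul_eq_mul]
  ring

lemma setIntegral_rpow_mul_gradNorm_rpow_le (he : Orthonormal ℝ e) (hp : 2 ≤ p)
    (hθ : ContDiff ℝ 1 θ) (hc : HasCompactSupport θ) (hθ₀ : ∀ x, 0 ≤ θ x)
    (hL : ∀ x, ‖fderiv ℝ θ x‖ ≤ L) (hΩ : tsupport θ ⊆ Ω) (hΩ_fin : μ Ω ≠ ⊤)
    (hu : ∀ x ∈ tsupport θ, ContDiffAt ℝ 2 u x) (hB₀ : 0 ≤ B)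
    (hB : ∀ x ∈ tsupport θ, ‖u x - m‖ ≤ B) :
    ∫ x in Ω, θ x ^ (p + 2) * gradNorm e u x ^ (p + 2) ∂μ ≤
      (4 * ((p + 2) * (B * L))) ^ (p + 2) * μ.real Ω
        + 2 * ((√(Fintype.card ι) + p) * B) ^ 2 *
            ∫ x in Ω, θ x ^ (p + 2) * gradNorm e u x ^ (p - 2) * hessNorm e u x ^ 2 ∂μ := by
  have hL₀ : 0 ≤ L := (norm_nonneg _).trans (hL 0)
  have hp₂ : p + 2 ≠ 0 := by linarith
  simp only [mul_assoc (_ ^ (p + 2))]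
  rw [setIntegral_rpow_mul_eq_of_tsupport_subset μ hp₂ hΩ,
    setIntegral_rpow_mul_eq_of_tsupport_subset μ hp₂ hΩ]
  simp only [← mul_assoc (_ ^ (p + 2))]
  refine (setIntegral_tsupport_rpow_mul_gradNorm_rpow_le μ he hp hθ hc hθ₀ hL hu hB).trans ?_
  gcongr

end Integration

theorem stmt16_general {ι E F : Type*} [Fintype ι] [NormedAddCommGroup E]
    [InnerProductSpace ℝ E] [FiniteDimensional ℝ E] [MeasurableSpace E] [BorelSpace E]
    [NormedAddCommGroup F] [InnerProductSpace ℝ F] (μ : Measure E) [μ.IsAddHaarMeasure]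
    {e : ι → E} (he : Orthonormal ℝ e) {p c₀ R B : ℝ} (hp : 2 ≤ p) (hR : 0 < R) {Ω : Set E}
    (hΩ_fin : μ Ω ≠ ⊤) {θ : E → ℝ} (hθ : ContDiff ℝ 1 θ) (hc : HasCompactSupport θ)
    (hθΩ : tsupport θ ⊆ Ω) (hθ₀ : ∀ x, 0 ≤ θ x) (hdθ : ∀ x, ‖fderiv ℝ θ x‖ ≤ c₀ / R)
    {u : E → F} (hu : ∀ x ∈ tsupport θ, ContDiffAt ℝ 2 u x) (m : F) (hB₀ : 0 ≤ B)
    (hB : ∀ x ∈ tsupport θ, ‖u x - m‖ ≤ B) :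
    ⨍ x in Ω, θ x ^ (p + 2) * gradNorm e u x ^ (p + 2) ∂μ ≤
      ((4 * (p + 2) * c₀) ^ (p + 2) + 2 * (√(Fintype.card ι) + p) ^ 2) *
        ((B / R) ^ (p + 2) + B ^ 2 * ⨍ x in Ω,
          θ x ^ (p + 2) * gradNorm e u x ^ (p - 2) * hessNorm e u x ^ 2 ∂μ) := by
  have hc₀ : 0 ≤ c₀ := by
    simpa [le_div_iff₀ hR] using (norm_nonneg _).trans (hdθ 0)
  have scaling : (4 * ((p + 2) * (B * (c₀ / R)))) ^ (p + 2) =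
      (4 * (p + 2) * c₀) ^ (p + 2) * (B / R) ^ (p + 2) := by
    rw [← Real.mul_rpow (by positivity) (by positivity)]
    ring_nf
  have integrated := setIntegral_rpow_mul_gradNorm_rpow_le μ he hp hθ hc hθ₀ hdθ hθΩ hΩ_fin hu
    hB₀ hB
  rw [scaling] at integrated
  simp only [setAverage_eq, smul_eq_mul]
  set J := ∫ x in Ω, θ x ^ (p + 2) * gradNorm e u x ^ (p - 2) * hessNorm e u x ^ 2 ∂μ
  set C₁ := (4 * (p + 2) * c₀) ^ (p + 2)
  set C₂ := 2 * (√(Fintype.card ι) + p) ^ 2 with hC₂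
  have hJ : 0 ≤ J := integral_nonneg fun x ↦ by
    have := hθ₀ x
    have := gradNorm_nonneg (e := e) (u := u) (x := x)
    positivity
  have : 0 ≤ C₁ := by positivity
  calc (μ.real Ω)⁻¹ * ∫ x in Ω, θ x ^ (p + 2) * gradNorm e u x ^ (p + 2) ∂μ
      ≤ (μ.real Ω)⁻¹ * (C₁ * (B / R) ^ (p + 2) * μ.real Ω + C₂ * B ^ 2 * J) := by
        gcongr
        exact integrated.trans_eq (by rw [hC₂]; ring)
    _ = (μ.real Ω)⁻¹ * μ.real Ω * (C₁ * (B / R) ^ (p + 2))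
          + C₂ * (B ^ 2 * ((μ.real Ω)⁻¹ * J)) := by ring
    _ ≤ 1 * (C₁ * (B / R) ^ (p + 2)) + C₂ * (B ^ 2 * ((μ.real Ω)⁻¹ * J)) := by
        gcongr
        exact inv_mul_le_one
    _ ≤ (C₁ + C₂) * ((B / R) ^ (p + 2) + B ^ 2 * ((μ.real Ω)⁻¹ * J)) := by
        have : 0 ≤ C₂ * (B / R) ^ (p + 2) := by positivity
        have : 0 ≤ C₁ * (B ^ 2 * ((μ.real Ω)⁻¹ * J)) := by positivity
        linarith

section EuclideanCoordinates

variable {d N : ℕ}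

lemma gradFrob_eq_gradNorm (u : EuclideanSpace ℝ (Fin d) → EuclideanSpace ℝ (Fin N)) :
    gradFrob u = gradNorm (fun i ↦ EuclideanSpace.single i 1) u := by
  ext x
  simp only [gradFrob, gradNorm, EuclideanSpace.real_norm_sq_eq]
  rw [Finset.sum_comm]

lemma hessFrob_eq_hessNorm (u : EuclideanSpace ℝ (Fin d) → EuclideanSpace ℝ (Fin N)) :
    hessFrob u = hessNorm (fun i ↦ EuclideanSpace.single i 1) u := by
  ext x
  simp only [hessFrob, hessNorm, EuclideanSpace.real_norm_sq_eq, iteratedFDeriv_two_apply]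
  rw [Finset.sum_comm]
  simp only [Finset.sum_comm (s := Finset.univ (α := Fin N))]
  rfl

lemma center_mem_cube (c : EuclideanSpace ℝ (Fin d)) {R : ℝ} (hR : 0 < R) : c ∈ cube c R :=
  fun i ↦ by simpa using hR

lemma isBounded_cube (c : EuclideanSpace ℝ (Fin d)) (R : ℝ) :
    Bornology.IsBounded (cube c R) := by
  refine (isBounded_closedBall (x := c) (r := √(∑ _i : Fin d, (R / 2) ^ 2))).subset fun x hx ↦ ?_
  rw [mem_closedBall, EuclideanSpace.dist_eq]
  gcongr with i
  exact (hx i).le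

end EuclideanCoordinates

/-- The cutoff interpolation estimate
`⨍_{2Q} θ^{p+2}|∇u|^{p+2} ≤ c[(B/R)^{p+2} + B² ⨍_{2Q} θ^{p+2}|∇u|^{p−2}|∇²u|²]`,
where `B` is (a bound for) `sup_{2Q}|u − ⟨u⟩_{2Q}|`, with `c = c(d,N,p,c₀)`. -/
theorem stmt16 (d N : ℕ) (p c₀ : ℝ) (hp : 2 ≤ p) (hc₀ : 0 < c₀) :
    ∃ c : ℝ, 0 < c ∧
      ∀ (cQ : EuclideanSpace ℝ (Fin d)) (R : ℝ), 0 < R →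
      ∀ θ : EuclideanSpace ℝ (Fin d) → ℝ,
        ContDiff ℝ 1 θ → tsupport θ ⊆ cube cQ (2 * R) →
        (∀ x, 0 ≤ θ x) → (∀ x, θ x ≤ 1) → (∀ x ∈ cube cQ R, θ x = 1) →
        (∀ x, ‖fderiv ℝ θ x‖ ≤ c₀ / R) →
      ∀ u : EuclideanSpace ℝ (Fin d) → EuclideanSpace ℝ (Fin N),
        (∃ U, IsOpen U ∧ closure (cube cQ (2 * R)) ⊆ U ∧ ContDiffOn ℝ 2 u U) →
      ∀ B : ℝ,
        (∀ x ∈ cube cQ (2 * R), ‖u x - ⨍ y in cube cQ (2 * R), u y‖ ≤ B) →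
        ⨍ x in cube cQ (2 * R), θ x ^ (p + 2) * gradFrob u x ^ (p + 2) ≤
          c * ((B / R) ^ (p + 2) +
            B ^ 2 * ⨍ x in cube cQ (2 * R),
              θ x ^ (p + 2) * gradFrob u x ^ (p - 2) * hessFrob u x ^ 2) := by
  refine ⟨(4 * (p + 2) * c₀) ^ (p + 2) + 2 * (√(Fintype.card (Fin d)) + p) ^ 2,
    by positivity, fun cQ R hR θ hθ hθQ hθ₀ _ _ hdθ u ⟨U, hU, hQU, hu⟩ B hB ↦ ?_⟩
  have hQ := isBounded_cube cQ (2 * R)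
  have hc : HasCompactSupport θ := hQ.isCompact_closure.of_isClosed_subset (isClosed_tsupport θ)
    (hθQ.trans subset_closure)
  rw [gradFrob_eq_gradNorm, hessFrob_eq_hessNorm]
  exact stmt16_general volume EuclideanSpace.orthonormal_single hp hR hQ.measure_lt_top.ne hθ hc
    hθQ hθ₀ hdθ (fun x hx ↦ hu.contDiffAt (hU.mem_nhds (hQU (subset_closure (hθQ hx))))) _
    ((norm_nonneg _).trans (hB cQ (center_mem_cube cQ (by positivity)))) fun x hx ↦ hB x (hθQ hx)
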